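/- (Discreteness of F-jumping exponents.) Let k be a field of prime characteristic p and let R be a commutative Noetherian k-algebra that is essentially of finite type over k and whose Frobenius endomorphism is finite and flat (equivalently, R is regular, F-finite, and essentially of finite type over k). Then for every ideal a of R, the set of F-jumping exponents of a is discrete: every bounded interval of real numbers contains only finitely many F-jumping exponents of a. -/

import Mathlib

/-!
The argument bounds degrees of generators of the ideals `(a^m)^{[1/q]}`.

Since Frobenius is finite and flat, `R` is a finite projective module over itself along Frobenius,
so there are finitely many additive maps `φ i` with `φ i (r ^ p * x) = r * φ i x` and elements `g i`
with `x = ∑ i, (φ i x) ^ p * g i`. Composing `e` of these maps gives the same for `q = p ^ e`, and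
`b^{[1/q]}` is the ideal generated by the values of the composites on `b`
(`IsFrobDualBasis.mem_frobRoot`, `IsFrobDualBasis.frobRoot_le`).

As `R` is essentially of finite type over `k`, there is a finite set `T ∋ 1` such that, with
`W = span k T`, every element of `R` is a fraction of elements of `⋃ d, W ^ d` with unit denominator
(`exists_filtration`). The field `k` is F-finite because `R` is (`frobenius_finite_base`), so after
multiplying the `φ i` by a common unit denominator one has `φ i (W ^ d) ⊆ W ^ (K + d / p)` for a
constant `K` (`exists_gauge`), and the `e`-fold composites send `W ^ d` into `W ^ (2 * K + d / q)`
(`exists_gauge_iterate`). Moreover `R` is generated over its `q`-th powers by elements of degree at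
most `|T| * q` (`reduction_induction`). Hence, if `a` is generated by elements of `W ^ d₀`, then
`(a^m)^{[1/q]}` with `m ≤ C * q` is generated by elements of `W ^ (2 * K + |T| + d₀ * C)`
(`isGenBy_frobRoot`), a finite-dimensional space independent of `m` and `q`.

So all `τ(a^c)` with `c ≤ y` are generated by elements of one finite-dimensional space. They form
a decreasing family in `c`, hence take finitely many values (`finite_of_isGenBy`), and distinct
jumping exponents give distinct values.
-/

open Ideal

/-- The `q`-th bracket power `J^{[q]}` of an ideal: the ideal generated by
the `q`-th powers of the elements of `J`. -/
def bracketPow {R : Type*} [CommRing R] (J : Ideal R) (q : ℕ) : Ideal R :=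
  Ideal.span ((fun x => x ^ q) '' (J : Set R))

/-- The ideal `b^{[1/q]}`: the smallest ideal `J` with `b ⊆ J^{[q]}`
(realized as the intersection of all such ideals). -/
def frobRoot {R : Type*} [CommRing R] (b : Ideal R) (q : ℕ) : Ideal R :=
  sInf {J : Ideal R | b ≤ bracketPow J q}

/-- The generalized test ideal `τ(a^c) = ⋃_{e ≥ 1} (a^{⌈c p^e⌉})^{[1/p^e]}`. -/
noncomputable def testIdeal {R : Type*} [CommRing R] (p : ℕ) (a : Ideal R) (c : ℝ) : Ideal R :=
  ⨆ e : ℕ, frobRoot (a ^ ⌈c * (p : ℝ) ^ (e + 1)⌉₊) (p ^ (e + 1))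

/-- `ν_a^J(q)`: the largest nonnegative integer `r` with `a^r ⊄ J^{[q]}`
(and `0` if there is no such `r`). -/
noncomputable def nuF {R : Type*} [CommRing R] (a J : Ideal R) (q : ℕ) : ℕ :=
  sSup {r : ℕ | ¬ a ^ r ≤ bracketPow J q}

/-- The F-threshold `c^J(a) = sup_{e ≥ 1} ν_a^J(p^e)/p^e`. -/
noncomputable def FThreshold {R : Type*} [CommRing R] (p : ℕ) (a J : Ideal R) : ℝ :=
  ⨆ e : ℕ, (nuF a J (p ^ (e + 1)) : ℝ) / (p : ℝ) ^ (e + 1)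

/-- `α > 0` is an F-jumping exponent of `a` if `τ(a^α) ≠ τ(a^c)` for all `0 ≤ c < α`. -/
def IsFJumpingExponent {R : Type*} [CommRing R] (p : ℕ) (a : Ideal R) (α : ℝ) : Prop :=
  0 < α ∧ ∀ c : ℝ, 0 ≤ c → c < α → testIdeal p a c ≠ testIdeal p a α

/-! ### Finite and flat ring maps; F-finiteness of the ground field -/

/-- A finite ring map has a finite generating family, written without module instances. -/
lemma exists_gens_of_finite {R S : Type*} [CommRing R] [CommRing S] (f : R →+* S)
    (hf : f.Finite) :
    ∃ (n : ℕ) (b : Fin n → S), ∀ x, ∃ c : Fin n → R, x = ∑ i, f (c i) * b i := by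
  let := f.toAlgebra
  have : Module.Finite R S := hf
  obtain ⟨n, s, hs⟩ := Module.Finite.exists_fin (R := R) (M := S)
  refine ⟨n, s, fun x => ?_⟩
  have hx : x ∈ Submodule.span R (Set.range s) := hs ▸ Submodule.mem_top
  obtain ⟨c, hc⟩ := (Submodule.mem_span_range_iff_exists_fun R).1 hx
  exact ⟨c, by rw [← hc]; rfl⟩

/-- A finite flat map from a Noetherian ring makes the target projective, hence gives a dual
basis, written without module instances. -/
lemma exists_dual_basis {R S : Type*} [CommRing R] [CommRing S] [IsNoetherianRing R]
    (f : R →+* S) (hf : f.Finite) (hfl : f.Flat) :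
    ∃ (n : ℕ) (φ : Fin n → S →+ R) (g : Fin n → S),
      (∀ i r x, φ i (f r * x) = r * φ i x) ∧ ∀ x, ∑ i, f (φ i x) * g i = x := by
  let := f.toAlgebra
  have : Module.Finite R S := hf
  have : Module.Flat R S := hfl
  have := Module.finitePresentation_of_finite R S
  have : Module.Projective R S := Module.Flat.projective_of_finitePresentation
  obtain ⟨n, u, v, -, -, huv⟩ := Module.Finite.exists_comp_eq_id_of_projective R S
  refine ⟨n, fun i => ((LinearMap.proj i).comp v).toAddMonoidHom,
    fun i => u (Pi.single i 1), fun i r x => ?_, fun x => ?_⟩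
  · change v (r • x) i = r * v x i
    simp
  · have h1 : u (v x) = x := LinearMap.congr_fun huv x
    conv_rhs => rw [← h1, pi_eq_sum_univ' (v x), map_sum]
    refine Finset.sum_congr rfl fun i _ => ?_
    rw [map_smul]
    rfl

/-- If every `F₁`-linearly independent family in `F₂` stays linearly independent over `E₁` in `E₂`,
then finiteness descends from `E₁ → E₂` to `F₁ → F₂`. -/
lemma finite_of_linDisjoint {F₁ F₂ E₁ E₂ : Type*} [Field F₁] [Field F₂] [Field E₁] [Field E₂]
    (f : F₁ →+* F₂) (g : E₁ →+* E₂) (j : F₂ →+* E₂) (hg : g.Finite)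
    (H : ∀ (s : Finset F₂), (∀ c : F₂ → F₁, ∑ x ∈ s, f (c x) * x = 0 → ∀ x ∈ s, c x = 0) →
      ∀ c : F₂ → E₁, ∑ x ∈ s, g (c x) * j x = 0 → ∀ x ∈ s, c x = 0) : f.Finite := by
  let := f.toAlgebra
  let := g.toAlgebra
  have : Module.Finite E₁ E₂ := hg
  set B := Module.Basis.ofVectorSpace F₁ F₂
  have hB : LinearIndepOn F₁ id (Module.Basis.ofVectorSpaceIndex F₁ F₂) :=
    Module.Basis.ofVectorSpaceIndex.linearIndependent F₁ F₂
  rw [linearIndepOn_iff'] at hB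
  have hi : LinearIndepOn E₁ j (Module.Basis.ofVectorSpaceIndex F₁ F₂) := by
    rw [linearIndepOn_iff']
    intro s c hs h
    exact H s (fun c' h' => hB s c' hs h') c h
  have := LinearIndependent.finite hi
  exact Module.Finite.of_basis B

/-- A field `k` with a finitely generated extension `K` that is F-finite is itself F-finite:
with a transcendence basis `t` of `K/k`, `K` is finite over `k(t)^p`, and linear independence
over `k^p` of elements of `k` persists over `k(t)^p`. -/
lemma frobenius_finite_of_ext (p : ℕ) [Fact p.Prime] (k K : Type*) [Field k] [Field K]
    [CharP k p] [CharP K p] [Algebra k K] [Algebra.EssFiniteType k K]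
    (h : (frobenius K p).Finite) : (frobenius k p).Finite := by
  classical
  obtain ⟨t, ht⟩ := exists_isTranscendenceBasis k K
  set L := IntermediateField.adjoin k (Set.range ((↑) : t → K)) with hL
  have : Algebra.IsAlgebraic L K := ht.isAlgebraic_field
  have : Algebra.EssFiniteType L K := Algebra.EssFiniteType.of_comp k L K
  have : Module.Finite L K := Algebra.finite_of_essFiniteType_of_isAlgebraic
  have hLK : (algebraMap L K).Finite := RingHom.finite_algebraMap.2 inferInstance
  refine finite_of_linDisjoint (frobenius k p) _ (algebraMap k K) (h.comp hLK) ?_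
  intro s hs c hc
  -- a common denominator for the coefficients `c x`, lying in `k[t]`
  have key : ∀ s : Finset k, ∃ d : MvPolynomial t k, d ≠ 0 ∧ ∀ x ∈ s, ∃ P : MvPolynomial t k,
      MvPolynomial.aeval ((↑) : t → K) d * (c x : K) = MvPolynomial.aeval ((↑) : t → K) P := by
    intro s
    induction s using Finset.induction_on with
    | empty => exact ⟨1, one_ne_zero, by simp⟩
    | insert a s _ ih =>
      obtain ⟨d, hd, hP⟩ := ih
      have hm := (c a).2
      rw [IntermediateField.mem_adjoin_range_iff] at hm
      obtain ⟨u, v, huv⟩ := hm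
      by_cases hv : MvPolynomial.aeval ((↑) : t → K) v = 0
      · refine ⟨d, hd, fun x hx => ?_⟩
        rcases Finset.mem_insert.1 hx with rfl | hx
        · exact ⟨0, by rw [huv, hv]; simp⟩
        · exact hP x hx
      · refine ⟨d * v, mul_ne_zero hd fun h0 => hv (by simp [h0]), fun x hx => ?_⟩
        rcases Finset.mem_insert.1 hx with rfl | hx
        · exact ⟨d * u, by rw [huv]; simp only [map_mul]; field_simp⟩
        · obtain ⟨P, hP⟩ := hP x hx
          exact ⟨P * v, by rw [map_mul, map_mul, ← hP]; ring⟩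
  obtain ⟨d, hd, hP⟩ := key s
  choose! P hP using hP
  have hinj : Function.Injective (MvPolynomial.aeval (R := k) ((↑) : t → K)) := ht.1
  have hd' : MvPolynomial.aeval ((↑) : t → K) d ≠ 0 := fun h0 => hd (hinj (by simpa using h0))
  have hrel : ∑ x ∈ s, P x ^ p * MvPolynomial.C x = 0 := by
    apply hinj
    have : MvPolynomial.aeval ((↑) : t → K) d ^ p *
        ∑ x ∈ s, ((frobenius K p).comp (algebraMap L K)) (c x) * algebraMap k K x = 0 := by
      rw [hc, mul_zero]
    rw [map_zero, ← this, map_sum, Finset.mul_sum]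
    refine Finset.sum_congr rfl fun x hx => ?_
    rw [map_mul, map_pow, ← hP x hx]
    simp only [RingHom.comp_apply, frobenius_def, MvPolynomial.aeval_C]
    change _ = _ * ((c x : K) ^ p * _)
    ring
  intro x hx
  have hPx : P x = 0 := by
    ext v
    have := hs (fun x => MvPolynomial.coeff v (P x)) (by
      have := congrArg (MvPolynomial.coeff (p • v)) hrel
      rw [MvPolynomial.coeff_sum] at this
      rw [MvPolynomial.coeff_zero] at this
      rw [← this]
      refine Finset.sum_congr rfl fun x hx => ?_
      rw [mul_comm (P x ^ p), MvPolynomial.coeff_C_mul, mul_comm, ← MvPolynomial.map_frobenius_expand, MvPolynomial.coeff_map,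
        MvPolynomial.coeff_expand_smul _ (Fact.out : p.Prime).ne_zero]) x hx
    simpa using this
  have := hP x hx
  rw [hPx, map_zero] at this
  have := (mul_eq_zero.1 this).resolve_left hd'
  exact_mod_cast this

/-- The ground field of a nonzero F-finite algebra essentially of finite type is F-finite. -/
lemma frobenius_finite_base (p : ℕ) [Fact p.Prime] (k R : Type*) [Field k] [CharP k p]
    [CommRing R] [Nontrivial R] [CharP R p] [Algebra k R] [Algebra.EssFiniteType k R]
    (h : (frobenius R p).Finite) : (frobenius k p).Finite := by
  obtain ⟨m, hm⟩ := Ideal.exists_maximal R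
  let := Ideal.Quotient.field m
  have : CharP (R ⧸ m) p := charP_of_injective_algebraMap (algebraMap k (R ⧸ m)).injective p
  refine frobenius_finite_of_ext p k (R ⧸ m) ?_
  have h1 : ((Ideal.Quotient.mk m).comp (frobenius R p)).Finite :=
    RingHom.Finite.comp (RingHom.Finite.of_surjective _ Ideal.Quotient.mk_surjective) h
  have h2 : (Ideal.Quotient.mk m).comp (frobenius R p) =
      (frobenius (R ⧸ m) p).comp (Ideal.Quotient.mk m) := by
    ext x; simp [frobenius_def]
  rw [h2] at h1
  exact h1.of_comp_finite

/-! ### Dual bases along Frobenius and Frobenius roots -/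

/-- `(φ, g)` is a dual basis of `R` over itself along `x ↦ x ^ q`: the `φ i` are additive and
`q`-inverse-linear, and `x = ∑ i, (φ i x) ^ q * g i`. -/
structure IsFrobDualBasis {R ι : Type*} [CommRing R] [Fintype ι] (q : ℕ) (φ : ι → R →+ R)
    (g : ι → R) : Prop where
  pow_mul : ∀ i r x, φ i (r ^ q * x) = r * φ i x
  sum_eq : ∀ x, ∑ i, φ i x ^ q * g i = x

namespace IsFrobDualBasis

variable {R ι : Type*} [CommRing R] [Fintype ι] {q : ℕ} {φ : ι → R →+ R} {g : ι → R}

/-- The maps of a dual basis carry `J^{[q]}` into `J`; with `frobRoot_le` this identifies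
`b^{[1/q]}` with the ideal generated by the images of `b` under these maps. -/
lemma mem_of_mem_bracketPow (h : IsFrobDualBasis q φ g) {J : Ideal R} {x : R}
    (hx : x ∈ bracketPow J q) (i : ι) : φ i x ∈ J := by
  have key : ∀ r, φ i (r * x) ∈ J := by
    refine Submodule.span_induction (p := fun x _ => ∀ r, φ i (r * x) ∈ J) ?_ ?_ ?_ ?_ hx
    · rintro _ ⟨y, hy, rfl⟩ r
      change φ i (r * y ^ q) ∈ J
      rw [mul_comm, h.pow_mul]
      exact J.mul_mem_right _ hy
    · simp
    · intro x y _ _ hx hy r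
      rw [mul_add, map_add]
      exact J.add_mem (hx r) (hy r)
    · intro a x _ hx r
      rw [smul_eq_mul, ← mul_assoc]
      exact hx _
  simpa using key 1

lemma mem_frobRoot (h : IsFrobDualBasis q φ g) {b : Ideal R} {x : R} (hx : x ∈ b) (i : ι) :
    φ i x ∈ frobRoot b q := by
  rw [frobRoot, Submodule.mem_sInf]
  exact fun J hJ => h.mem_of_mem_bracketPow (hJ hx) i

lemma frobRoot_le (h : IsFrobDualBasis q φ g) {b J : Ideal R}
    (hJ : ∀ x ∈ b, ∀ i, φ i x ∈ J) : frobRoot b q ≤ J := by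
  refine sInf_le fun x hx => ?_
  rw [← h.sum_eq x]
  exact Ideal.sum_mem _ fun i _ =>
    Ideal.mul_mem_right _ _ (Ideal.subset_span ⟨_, hJ x hx i, rfl⟩)

/-- Dual bases for `x ↦ x ^ (p ^ e)` and `x ↦ x ^ p` compose to one for `x ↦ x ^ (p ^ (e + 1))`. -/
lemma comp {κ : Type*} [Fintype κ] {p e : ℕ} [Fact p.Prime] [CharP R p] {ψ : κ → R →+ R}
    {f : κ → R} (h : IsFrobDualBasis (p ^ e) φ g) (h' : IsFrobDualBasis p ψ f) :
    IsFrobDualBasis (p ^ (e + 1)) (fun i : ι × κ => (ψ i.2).comp (φ i.1))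
      (fun i => f i.2 ^ p ^ e * g i.1) where
  pow_mul i r x := by
    rw [AddMonoidHom.comp_apply, pow_succ', _root_.pow_mul r p, h.pow_mul, h'.pow_mul]
    rfl
  sum_eq x := by
    rw [Fintype.sum_prod_type]
    conv_rhs => rw [← h.sum_eq x]
    refine Finset.sum_congr rfl fun i _ => ?_
    conv_rhs => rw [← h'.sum_eq (φ i x), sum_pow_char_pow, Finset.sum_mul]
    refine Finset.sum_congr rfl fun j _ => ?_
    rw [mul_pow, ← _root_.pow_mul, ← pow_succ', mul_assoc]
    rfl

end IsFrobDualBasis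

lemma frobRoot_mono {R : Type*} [CommRing R] {b c : Ideal R} (h : b ≤ c) (q : ℕ) :
    frobRoot b q ≤ frobRoot c q :=
  sInf_le_sInf fun _ hJ => h.trans hJ

lemma testIdeal_anti {R : Type*} [CommRing R] (p : ℕ) (a : Ideal R) {c d : ℝ} (h : c ≤ d) :
    testIdeal p a d ≤ testIdeal p a c := by
  refine iSup_mono fun e => frobRoot_mono (Ideal.pow_le_pow_right (Nat.ceil_mono ?_)) _
  gcongr

/-! ### The degree filtration -/

section Filtration

variable {k R : Type*} [Field k] [CommRing R] [Algebra k R] {T : Finset R}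

lemma span_pow_mono (h1 : (1 : R) ∈ T) {m n : ℕ} (h : m ≤ n) :
    Submodule.span k (T : Set R) ^ m ≤ Submodule.span k (T : Set R) ^ n :=
  pow_le_pow_right' (Submodule.one_le.2 (Submodule.subset_span h1)) h

/-- Pigeonhole: a monomial of degree `d > |T| (q - 1)` in the elements of `T` is divisible by
the `q`-th power of one of them. Phrased as an induction principle for sums of such monomials
with coefficients in `k`. -/
lemma pigeonhole_induction {q d : ℕ} (hd : T.card * (q - 1) < d) {P : R → Prop} (h0 : P 0)
    (hadd : ∀ x y, P x → P y → P (x + y))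
    (h : ∀ w ∈ T, ∀ z ∈ Submodule.span k (T : Set R) ^ (d - q), P (w ^ q * z)) :
    ∀ x ∈ Submodule.span k (T : Set R) ^ d, P x := by
  classical
  intro x hx
  rw [Submodule.span_pow] at hx
  have key : ∀ c : k, P (c • x) := by
    refine Submodule.span_induction (p := fun x _ => ∀ c : k, P (c • x)) ?_ ?_ ?_ ?_ hx
    · intro x hx c
      obtain ⟨f, rfl⟩ := Set.mem_pow.1 hx
      obtain ⟨w, hw, hlt⟩ := Finset.exists_lt_card_fiber_of_mul_lt_card_of_maps_to
        (s := (Finset.univ : Finset (Fin d))) (t := T) (f := fun i => (f i : R)) (n := q - 1)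
        (fun i _ => (f i).2) (by simpa using hd)
      obtain ⟨s, hs, hsc⟩ := Finset.exists_subset_card_eq (Nat.le_of_pred_lt hlt : q ≤ _)
      have hprod : (List.ofFn fun i => (f i : R)).prod = w ^ q * ∏ i ∈ sᶜ, (f i : R) := by
        rw [List.prod_ofFn, ← Finset.prod_mul_prod_compl s, ← hsc]
        congr 1
        exact Finset.prod_eq_pow_card fun i hi => (Finset.mem_filter.1 (hs hi)).2
      rw [hprod, mul_comm, ← smul_mul_assoc, mul_comm]
      refine h w hw _ (Submodule.smul_mem _ _ ?_)
      have hc : d - q = sᶜ.card := by rw [Finset.card_compl, hsc, Fintype.card_fin]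
      rw [hc]
      generalize sᶜ = u
      induction u using Finset.induction_on with
      | empty =>
        rw [Finset.prod_empty, Finset.card_empty, pow_zero]
        exact Submodule.one_le.1 le_rfl
      | insert i u hi ih =>
        rw [Finset.prod_insert hi, Finset.card_insert_of_notMem hi, pow_succ']
        exact Submodule.mul_mem_mul (Submodule.subset_span (f i).2) ih
    · simpa using h0
    · intro x y _ _ hx hy c
      rw [smul_add]
      exact hadd _ _ (hx c) (hy c)
    · intro a x _ hx c
      rw [smul_smul]
      exact hx _
  simpa using key 1

/-- Every element of the filtration is a sum of products `y ^ q * z` with `z` of degree at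
most `|T| (q - 1)`. -/
lemma reduction_induction (h1 : (1 : R) ∈ T) {q : ℕ} (hq : 0 < q) {P : R → Prop} (h0 : P 0)
    (hadd : ∀ x y, P x → P y → P (x + y))
    (h : ∀ y, ∀ z ∈ Submodule.span k (T : Set R) ^ (T.card * (q - 1)), P (y ^ q * z)) (d : ℕ) :
    ∀ x ∈ Submodule.span k (T : Set R) ^ d, ∀ y, P (y ^ q * x) := by
  induction d using Nat.strong_induction_on with
  | _ d ih =>
    intro x hx
    rcases le_or_gt d (T.card * (q - 1)) with hd | hd
    · exact fun y => h y x (span_pow_mono h1 hd hx)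
    · refine pigeonhole_induction (k := k) hd (P := fun x => ∀ y, P (y ^ q * x)) (by simpa using h0)
        (fun x y hx hy r => by rw [mul_add]; exact hadd _ _ (hx r) (hy r)) ?_ x hx
      intro w _ z hz y
      rw [← mul_assoc, ← mul_pow]
      exact ih (d - q) (by omega) z hz _

/-- Finitely many elements have a common denominator. -/
lemma common_denominator
    (hloc : ∀ r : R, ∃ t, IsUnit t ∧ ∃ d, t ∈ Submodule.span k (T : Set R) ^ d ∧
      t * r ∈ Submodule.span k (T : Set R) ^ d) (h1 : (1 : R) ∈ T) {S : Set R} (hS : S.Finite) :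
    ∃ t, IsUnit t ∧ ∃ d, t ∈ Submodule.span k (T : Set R) ^ d ∧
      ∀ r ∈ S, t * r ∈ Submodule.span k (T : Set R) ^ d := by
  induction S, hS using Set.Finite.induction_on with
  | empty => exact ⟨1, isUnit_one, 1, by simpa using Submodule.subset_span h1, by simp⟩
  | @insert a S _ _ ih =>
    obtain ⟨t, ht, d, htd, hS⟩ := ih
    obtain ⟨u, hu, e, hue, ha⟩ := hloc a
    refine ⟨t * u, ht.mul hu, d + e, ?_, ?_⟩
    · rw [pow_add]; exact Submodule.mul_mem_mul htd hue
    · intro r hr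
      rw [pow_add]
      rcases hr with rfl | hr
      · rw [mul_assoc]; exact Submodule.mul_mem_mul htd ha
      · rw [mul_right_comm]; exact Submodule.mul_mem_mul (hS r hr) hue

/-! ### Degree bounds for the dual basis maps -/

/-- After rescaling by a unit, the maps of a dual basis divide degrees by `p`, up to a bounded
error. On elements of small degree this holds because `k` is finite over `k ^ p`, so that only
finitely many values and their `k`-combinations occur; larger degrees reduce to these by pulling
`p`-th powers out. -/
lemma exists_gauge (p : ℕ) [Fact p.Prime] [CharP k p] (hk : (frobenius k p).Finite)
    (h1 : (1 : R) ∈ T)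
    (hloc : ∀ r : R, ∃ t, IsUnit t ∧ ∃ d, t ∈ Submodule.span k (T : Set R) ^ d ∧
      t * r ∈ Submodule.span k (T : Set R) ^ d)
    {ι : Type*} [Fintype ι] {φ : ι → R →+ R} {g : ι → R} (h : IsFrobDualBasis p φ g) :
    ∃ (ψ : ι → R →+ R) (f : ι → R) (K : ℕ), IsFrobDualBasis p ψ f ∧
      ∀ i d, ∀ x ∈ Submodule.span k (T : Set R) ^ d,
        ψ i x ∈ Submodule.span k (T : Set R) ^ (K + d / p) := by
  have hp := (Fact.out : p.Prime)
  obtain ⟨n, b, hb⟩ := exists_gens_of_finite _ hk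
  set N := T.card * (p - 1) with hN
  obtain ⟨S₀, hS₀⟩ := (Submodule.fg_span T.finite_toSet : (Submodule.span k (T : Set R)).FG).pow N
  have hfin : (Set.range fun a : ι × Fin n × S₀ =>
      φ a.1 (algebraMap k R (b a.2.1) * a.2.2)).Finite := Set.finite_range _
  obtain ⟨t, ht, K, -, htK⟩ := common_denominator hloc h1 hfin
  obtain ⟨u, rfl⟩ := ht
  refine ⟨fun i => (AddMonoidHom.mulLeft (u : R)).comp (φ i),
    fun i => ((u⁻¹ : Rˣ) : R) ^ p * g i, K, ⟨?_, ?_⟩, ?_⟩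
  · intro i r x
    change (u : R) * φ i _ = r * (u * φ i x)
    rw [h.pow_mul]; ring
  · intro x
    conv_rhs => rw [← h.sum_eq x]
    refine Finset.sum_congr rfl fun i _ => ?_
    change ((u : R) * φ i x) ^ p * _ = _
    rw [mul_pow, mul_mul_mul_comm, ← mul_pow, Units.mul_inv, one_pow, one_mul]
  · intro i
    -- elements of degree at most `N`
    have base : ∀ x ∈ Submodule.span k (T : Set R) ^ N,
        (u : R) * φ i x ∈ Submodule.span k (T : Set R) ^ K := by
      intro x hx
      rw [← hS₀] at hx
      have key : ∀ c : k, (u : R) * φ i (c • x) ∈ Submodule.span k (T : Set R) ^ K := by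
        refine Submodule.span_induction (p := fun x _ => ∀ c : k,
          (u : R) * φ i (c • x) ∈ Submodule.span k (T : Set R) ^ K) ?_ ?_ ?_ ?_ hx
        · intro s hs c
          obtain ⟨c', hc'⟩ := hb c
          rw [hc', Finset.sum_smul, map_sum, Finset.mul_sum]
          refine Submodule.sum_mem _ fun j _ => ?_
          have : (frobenius k p (c' j) * b j) • s =
              algebraMap k R (c' j) ^ p * (algebraMap k R (b j) * s) := by
            rw [Algebra.smul_def, map_mul, frobenius_def, map_pow, mul_assoc]
          rw [this, h.pow_mul, mul_left_comm, ← Algebra.smul_def]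
          exact Submodule.smul_mem _ _ (htK _ ⟨(i, j, ⟨s, hs⟩), rfl⟩)
        · simp
        · intro x y _ _ hx hy c
          rw [smul_add, map_add, mul_add]
          exact Submodule.add_mem _ (hx c) (hy c)
        · intro a x _ hx c
          rw [smul_smul]
          exact hx _
      simpa using key 1
    intro d
    change ∀ x ∈ _, (u : R) * φ i x ∈ _
    induction d using Nat.strong_induction_on with
    | _ d ih =>
      rcases le_or_gt d N with hd | hd
      · exact fun x hx => span_pow_mono h1 (Nat.le_add_right _ _) (base x (span_pow_mono h1 hd hx))
      · have hT : 1 ≤ T.card := Finset.card_pos.2 ⟨1, h1⟩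
        have hpN : p - 1 ≤ N := by rw [hN]; exact Nat.le_mul_of_pos_left _ hT
        have hpd : p ≤ d := by omega
        refine pigeonhole_induction (k := k) (q := p) hd (by simp)
          (fun x y hx hy => by rw [map_add, mul_add]; exact Submodule.add_mem _ hx hy) ?_
        intro w hw z hz
        have := ih (d - p) (by have := hp.pos; omega) z hz
        rw [h.pow_mul, mul_left_comm]
        have hdeg : K + d / p = 1 + (K + (d - p) / p) := by
          obtain ⟨m, rfl⟩ := Nat.exists_eq_add_of_le hpd
          rw [Nat.add_sub_cancel_left, Nat.add_div_left _ hp.pos]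
          omega
        rw [hdeg, pow_add, pow_one]
        exact Submodule.mul_mem_mul (Submodule.subset_span hw) this

/-- The error in degree stays bounded under iteration, because it is divided by `p ≥ 2` at each
step. -/
lemma exists_gauge_iterate (p : ℕ) [Fact p.Prime] [CharP R p] {ι : Type} [Fintype ι]
    {φ : ι → R →+ R} {g : ι → R} (h : IsFrobDualBasis p φ g) (h1 : (1 : R) ∈ T) {K : ℕ}
    (hK : ∀ i d, ∀ x ∈ Submodule.span k (T : Set R) ^ d,
        φ i x ∈ Submodule.span k (T : Set R) ^ (K + d / p)) (e : ℕ) :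
    ∃ (κ : Type) (_ : Fintype κ) (ψ : κ → R →+ R) (f : κ → R), IsFrobDualBasis (p ^ e) ψ f ∧
      ∀ i d, ∀ x ∈ Submodule.span k (T : Set R) ^ d,
        ψ i x ∈ Submodule.span k (T : Set R) ^ (2 * K + d / p ^ e) := by
  have hp := (Fact.out : p.Prime)
  induction e with
  | zero =>
    refine ⟨Unit, inferInstance, fun _ => AddMonoidHom.id R, fun _ => 1, ⟨by simp, by simp⟩, ?_⟩
    intro _ d x hx
    exact span_pow_mono h1 (by simp) hx
  | succ e ih =>
    obtain ⟨κ, _, ψ, f, hψ, hdeg⟩ := ih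
    refine ⟨κ × ι, inferInstance, _, _, hψ.comp h, ?_⟩
    intro i d x hx
    refine span_pow_mono h1 ?_ (hK i.2 _ _ (hdeg i.1 d x hx))
    have h2 : (2 * K + d / p ^ e) / p ≤ K + d / p ^ e / p := by
      calc (2 * K + d / p ^ e) / p ≤ (p * K + d / p ^ e) / p := by
            gcongr; exact hp.two_le
        _ = K + d / p ^ e / p := by rw [Nat.mul_add_div hp.pos]
    rw [Nat.div_div_eq_div_mul, ← pow_succ] at h2
    omega

/-! ### Ideals generated in bounded degree -/

/-- `I` is generated by its elements lying in `V`. -/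
def IsGenBy (V : Submodule k R) (I : Ideal R) : Prop :=
  I ≤ Ideal.span ((I : Set R) ∩ V)

lemma IsGenBy.iSup {V : Submodule k R} {ι : Sort*} {I : ι → Ideal R} (h : ∀ i, IsGenBy V (I i)) :
    IsGenBy V (⨆ i, I i) :=
  iSup_le fun i => (h i).trans
    (Ideal.span_mono (Set.inter_subset_inter_left _ (le_iSup I i)))

open Pointwise in
/-- The ideals `(a ^ m)^{[1/q]}` with `m ≤ C * q` are generated in degree bounded independently
of `m` and `q`. -/
lemma isGenBy_frobRoot {q : ℕ} (hq : 0 < q) {κ : Type*} [Fintype κ] {ψ : κ → R →+ R} {f : κ → R}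
    (h : IsFrobDualBasis q ψ f) (h1 : (1 : R) ∈ T)
    (hloc : ∀ r : R, ∃ t, IsUnit t ∧ ∃ d, t ∈ Submodule.span k (T : Set R) ^ d ∧
      t * r ∈ Submodule.span k (T : Set R) ^ d) {K : ℕ}
    (hdeg : ∀ i d, ∀ x ∈ Submodule.span k (T : Set R) ^ d,
        ψ i x ∈ Submodule.span k (T : Set R) ^ (2 * K + d / q))
    {S : Set R} {d₀ : ℕ} (hS : S ⊆ (Submodule.span k (T : Set R) ^ d₀ : Submodule k R))
    {C m : ℕ} (hm : m ≤ C * q) :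
    IsGenBy (Submodule.span k (T : Set R) ^ (2 * K + (T.card + d₀ * C)))
      (frobRoot (Ideal.span S ^ m) q) := by
  set J := Ideal.span ((frobRoot (Ideal.span S ^ m) q : Set R) ∩
    (Submodule.span k (T : Set R) ^ (2 * K + (T.card + d₀ * C)) : Submodule k R)) with hJ
  have hpow : Ideal.span S ^ m = Ideal.span (S ^ m) := Submodule.span_pow S m
  refine h.frobRoot_le (J := J) fun x hx i => ?_
  have key : ∀ r, ψ i (r * x) ∈ J := by
    rw [hpow] at hx
    refine Submodule.span_induction (p := fun x _ => ∀ r, ψ i (r * x) ∈ J) ?_ ?_ ?_ ?_ hx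
    · intro s hs r
      have hs' : s ∈ Submodule.span k (T : Set R) ^ (d₀ * m) := by
        rw [pow_mul]
        exact Submodule.pow_subset_pow _ (Set.pow_subset_pow_left hS hs)
      have main : ∀ d, ∀ x ∈ Submodule.span k (T : Set R) ^ d, ∀ y,
          ψ i (y ^ q * x * s) ∈ J := by
        refine fun d => reduction_induction (k := k) h1 hq
          (P := fun x => ψ i (x * s) ∈ J) (by simp)
          (fun x y hx hy => by rw [add_mul, map_add]; exact J.add_mem hx hy) ?_ d
        intro y z hz
        rw [mul_assoc, h.pow_mul]
        refine J.mul_mem_left _ (Ideal.subset_span ⟨h.mem_frobRoot ?_ i, ?_⟩)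
        · rw [hpow]
          exact Ideal.mul_mem_left _ _ (Ideal.subset_span hs)
        · refine span_pow_mono h1 ?_ (hdeg i (T.card * (q - 1) + d₀ * m) (z * s) ?_)
          · gcongr
            refine Nat.div_le_of_le_mul ?_
            calc T.card * (q - 1) + d₀ * m ≤ T.card * q + d₀ * (C * q) := by
                  gcongr; exact Nat.sub_le _ _
              _ = q * (T.card + d₀ * C) := by ring
          · rw [pow_add]; exact Submodule.mul_mem_mul hz hs'
      -- write `r = (t⁻¹) ^ q * (t ^ (q - 1) * (t * r))` with a denominator `t` of `r`
      obtain ⟨t, ⟨u, rfl⟩, d, htd, hr⟩ := hloc r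
      have := main (d * (q - 1) + d) ((u : R) ^ (q - 1) * (u * r)) (by
        rw [pow_add, pow_mul]
        exact Submodule.mul_mem_mul (Submodule.pow_mem_pow _ htd _) hr) ((u⁻¹ : Rˣ) : R)
      have he : ((u⁻¹ : Rˣ) : R) ^ q * ((u : R) ^ (q - 1) * (u * r)) = r := by
        rw [← mul_assoc ((u : R) ^ (q - 1)), ← pow_succ, Nat.sub_add_cancel hq, ← mul_assoc,
          ← mul_pow, Units.inv_mul, one_pow, one_mul]
      rwa [he] at this
    · simp
    · intro x y _ _ hx hy r
      rw [mul_add, map_add]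
      exact J.add_mem (hx r) (hy r)
    · intro a x _ hx r
      rw [smul_eq_mul, ← mul_assoc]
      exact hx _
  simpa using key 1

/-- A decreasing family of ideals, pairwise distinct on `s` and all generated there by elements of
one finite-dimensional space, forces `s` to be finite: the dimension of the trace on that space
tells the ideals apart. -/
lemma finite_of_isGenBy {V : Submodule k R} [FiniteDimensional k V] {s : Set ℝ}
    {τ : ℝ → Ideal R} (hτ : ∀ α ∈ s, IsGenBy V (τ α)) (hanti : Antitone τ)
    (hinj : ∀ α ∈ s, ∀ β ∈ s, α < β → τ α ≠ τ β) : s.Finite := by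
  set D : ℝ → Submodule k R := fun α => (τ α).restrictScalars k ⊓ V with hD
  have hDV : ∀ α, FiniteDimensional k (D α) := fun α =>
    Submodule.finiteDimensional_of_le (inf_le_right : D α ≤ V)
  have hlt : ∀ α ∈ s, ∀ β ∈ s, α < β → Module.finrank k (D β) < Module.finrank k (D α) := by
    intro α hα β hβ hαβ
    have hle : D β ≤ D α := fun x hx => ⟨hanti hαβ.le hx.1, hx.2⟩
    refine Submodule.finrank_lt_finrank_of_lt (lt_of_le_of_ne hle fun heq => ?_)
    refine hinj α hα β hβ hαβ (le_antisymm ((hτ α hα).trans (Ideal.span_le.2 ?_)) (hanti hαβ.le))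
    intro x hx
    have : x ∈ D α := hx
    rw [← heq] at this
    exact this.1
  refine Set.Finite.of_finite_image (f := fun α => Module.finrank k (D α))
    ((Set.finite_Iic (Module.finrank k V)).subset ?_) ?_
  · rintro _ ⟨α, -, rfl⟩
    exact Submodule.finrank_mono (inf_le_right : D α ≤ V)
  · intro α hα β hβ heq
    rcases lt_trichotomy α β with hlt' | rfl | hlt'
    · exact absurd heq (hlt α hα β hβ hlt').ne'
    · rfl
    · exact absurd heq (hlt β hβ α hα hlt').ne

end Filtration

/-- For `R` essentially of finite type over `k`, a finite set `T ∋ 1` such that every element of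
`R` becomes a polynomial in `T` after multiplication by a unit which is itself such a polynomial. -/
lemma exists_filtration (k R : Type*) [Field k] [CommRing R] [Algebra k R]
    [Algebra.EssFiniteType k R] :
    ∃ T : Finset R, (1 : R) ∈ T ∧
      ∀ r : R, ∃ t, IsUnit t ∧ ∃ d, t ∈ Submodule.span k (T : Set R) ^ d ∧
        t * r ∈ Submodule.span k (T : Set R) ^ d := by
  classical
  obtain ⟨σ, hσ⟩ := (Algebra.essFiniteType_iff k R).1 inferInstance
  have h1 : (1 : R) ∈ insert 1 σ := Finset.mem_insert_self _ _
  have hadj : ∀ x ∈ Algebra.adjoin k (σ : Set R),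
      ∃ d, x ∈ Submodule.span k ((insert 1 σ : Finset R) : Set R) ^ d := by
    intro x hx
    induction hx using Algebra.adjoin_induction with
    | mem x hx =>
      exact ⟨1, by rw [pow_one]; exact Submodule.subset_span (Finset.mem_insert_of_mem hx)⟩
    | algebraMap r => exact ⟨0, by rw [pow_zero]; exact Submodule.algebraMap_mem r⟩
    | add x y _ _ hx hy =>
      obtain ⟨d, hd⟩ := hx
      obtain ⟨e, he⟩ := hy
      exact ⟨max d e, Submodule.add_mem _ (span_pow_mono h1 (le_max_left _ _) hd)
        (span_pow_mono h1 (le_max_right _ _) he)⟩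
    | mul x y _ _ hx hy =>
      obtain ⟨d, hd⟩ := hx
      obtain ⟨e, he⟩ := hy
      exact ⟨d + e, by rw [pow_add]; exact Submodule.mul_mem_mul hd he⟩
  refine ⟨insert 1 σ, h1, fun r => ?_⟩
  obtain ⟨t, ht, hu, htr⟩ := hσ r
  obtain ⟨d, hd⟩ := hadj t ht
  obtain ⟨e, he⟩ := hadj _ htr
  rw [mul_comm] at he
  exact ⟨t, hu, max d e, span_pow_mono h1 (le_max_left _ _) hd,
    span_pow_mono h1 (le_max_right _ _) he⟩

/-! ### Discreteness -/

/-- discreteness: the set of F-jumping exponents of an ideal in a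
regular F-finite ring essentially of finite type over a field is discrete. -/
theorem stmt18_jumping_exponents_discrete
    (p : ℕ) [Fact p.Prime] (k : Type*) [Field k] [CharP k p]
    (R : Type*) [CommRing R] [IsNoetherianRing R] [CharP R p] [Algebra k R]
    [Algebra.EssFiniteType k R]
    (hfin : (frobenius R p).Finite) (hflat : (frobenius R p).Flat)
    (a : Ideal R) (x y : ℝ) :
    {α : ℝ | IsFJumpingExponent p a α ∧ α ∈ Set.Icc x y}.Finite := by
  rcases subsingleton_or_nontrivial R with hR | hR
  · refine Set.Finite.subset Set.finite_empty ?_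
    rintro α ⟨⟨h0, h⟩, -⟩
    exact h 0 le_rfl h0 (Subsingleton.elim _ _)
  have hp := (Fact.out : p.Prime)
  have hk : (frobenius k p).Finite := frobenius_finite_base p k R hfin
  obtain ⟨T, h1, hloc⟩ := exists_filtration k R
  obtain ⟨n, φ, g, hφ, hg⟩ := exists_dual_basis _ hfin hflat
  obtain ⟨ψ, f, K, hψ, hK⟩ := exists_gauge p hk h1 hloc (φ := φ) (g := g) ⟨hφ, hg⟩
  -- generators of `a`, rescaled by a unit into the filtration
  obtain ⟨S, hS⟩ : a.FG := IsNoetherian.noetherian a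
  obtain ⟨t, ht, d₀, -, hd₀⟩ := common_denominator hloc h1 S.finite_toSet
  have ha : a = Ideal.span ((fun r => t * r) '' (S : Set R)) := by
    rw [← hS]
    refine le_antisymm (Ideal.span_le.2 fun r hr => ?_) (Ideal.span_le.2 ?_)
    · obtain ⟨u, rfl⟩ := ht
      have := Ideal.mul_mem_left (Ideal.span ((fun r => (u : R) * r) '' (S : Set R)))
        ((u⁻¹ : Rˣ) : R) (Ideal.subset_span ⟨r, hr, rfl⟩)
      simpa using this
    · rintro _ ⟨r, hr, rfl⟩
      exact Ideal.mul_mem_left _ _ (Ideal.subset_span hr)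
  have hfd : (Submodule.span k (T : Set R) ^
      (2 * K + (T.card + d₀ * ⌈y⌉₊)) : Submodule k R).FG :=
    (Submodule.fg_span T.finite_toSet).pow _
  have : FiniteDimensional k (Submodule.span k (T : Set R) ^
      (2 * K + (T.card + d₀ * ⌈y⌉₊)) : Submodule k R) := Module.Finite.iff_fg.2 hfd
  refine finite_of_isGenBy (τ := testIdeal p a) ?_ (fun c d h => testIdeal_anti p a h) ?_ (k := k)
    (V := Submodule.span k (T : Set R) ^ (2 * K + (T.card + d₀ * ⌈y⌉₊)))
  · rintro α ⟨-, -, hαy⟩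
    refine IsGenBy.iSup fun e => ?_
    obtain ⟨κ, _, ψ', f', hψ', hdeg⟩ := exists_gauge_iterate p hψ h1 hK (e + 1)
    rw [ha]
    refine isGenBy_frobRoot (pow_pos hp.pos _) hψ' h1 hloc hdeg ?_ ?_
    · rintro _ ⟨r, hr, rfl⟩
      exact hd₀ r hr
    · refine Nat.ceil_le.2 ?_
      push_cast
      gcongr
      exact hαy.trans (Nat.le_ceil y)
  · rintro α ⟨⟨h0, -⟩, -⟩ β ⟨⟨-, h⟩, -⟩ hαβ
    exact h α h0.le hαβ
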